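/- (Compatibility of the Lax pair for discrete O surfaces.) Let X⃗, Y⃗ : ℤ² → ℝ³ with ‖X⃗‖² = 1, ‖Y⃗‖² = 1, let S be a constant symmetric real n×n matrix with bilinear form ⟨u, v⟩ = u S vᵀ on ℝⁿ, let H⃗, K⃗ : ℤ² → ℝⁿ, and let p, q, Γ : ℤ² → ℝ with Γ² = 1 − pq, Γ ≠ 0 everywhere satisfy X⃗₍₂₎ = (X⃗ + qY⃗)/Γ, Y⃗₍₁₎ = (Y⃗ + pX⃗)/Γ, H⃗₍₂₎ = (H⃗ + pK⃗)/Γ, K⃗₍₁₎ = (K⃗ + qH⃗)/Γ, together with 2 X⃗·Y⃗ + p + q = 0 and 2⟨H⃗, K⃗⟩ + p⟨K⃗, K⃗⟩ + q⟨H⃗, H⃗⟩ = 0 at every lattice point. Put α = ⟨H⃗, H⃗⟩, β = ⟨K⃗, K⃗⟩, fix λ ∈ ℝ with 1 − αλ ≠ 0 and 1 − βλ ≠ 0 at every lattice point, and define the lattice-dependent linear maps L₁, L₂ on ℝ³ × ℝⁿ by L₁(m, w) = (m + (2λ/(1−αλ))(α(X⃗·m) + ⟨H⃗, w⟩)X⃗,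 w + (2/(1−αλ))((X⃗·m) + λ⟨H⃗, w⟩)H⃗) and L₂(m, w) = (m + (2λ/(1−βλ))(β(Y⃗·m) + ⟨K⃗, w⟩)Y⃗, w + (2/(1−βλ))((Y⃗·m) + λ⟨K⃗, w⟩)K⃗). Then the discrete zero-curvature condition holds: at every lattice point, L₂₍₁₎ ∘ L₁ = L₁₍₂₎ ∘ L₂ as linear maps on ℝ³ × ℝⁿ. -/

import Mathlib

/-!
Write `a = X⃗·m`, `b = Y⃗·m`, `c = ⟨H⃗, w⟩`, `d = ⟨K⃗, w⟩`. Expanding the squared lengths and using the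
two constraints gives `β₍₁₎ = β` and `α₍₂₎ = α`, so the shifted maps have the same denominators as
the unshifted ones. In both composites the `ℝ³` part is then `m` plus a combination of `X⃗` and
`Y⃗`, and the `ℝⁿ` part is `w` plus a combination of `H⃗` and `K⃗`. The coefficients are rational
functions of `p, q, α, β, λ, a, b, c, d`, since `X⃗·Y⃗ = -(p+q)/2` and `⟨H⃗, K⃗⟩ = -(pβ+qα)/2`, and
`Γ` enters only through `Γ⁻² = 1/(1 - pq)`. They agree by `lax_coeff`, applied once as stated and
once with the roles of the two lattice directions exchanged.
-/

noncomputable section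

/-- Shift in the first lattice direction: `f₍₁₎(n₁,n₂) = f(n₁+1,n₂)`. -/
def s1 (n : ℤ × ℤ) : ℤ × ℤ := (n.1 + 1, n.2)

/-- Shift in the second lattice direction: `f₍₂₎(n₁,n₂) = f(n₁,n₂+1)`. -/
def s2 (n : ℤ × ℤ) : ℤ × ℤ := (n.1, n.2 + 1)

/-- Euclidean inner product on ℝ³. -/
def dot3 (u v : Fin 3 → ℝ) : ℝ := ∑ i, u i * v i

/-- The bilinear form `⟨u, v⟩ = u S vᵀ` on row vectors in ℝⁿ given by a matrix `S`. -/
def formS {nn : ℕ} (S : Matrix (Fin nn) (Fin nn) ℝ) (u v : Fin nn → ℝ) : ℝ :=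
  ∑ i, ∑ j, u i * S i j * v j

lemma dot3_add_left (u v w : Fin 3 → ℝ) : dot3 (u + v) w = dot3 u w + dot3 v w := by
  simp [dot3, add_mul, Finset.sum_add_distrib]

lemma dot3_smul_left (r : ℝ) (u v : Fin 3 → ℝ) : dot3 (r • u) v = r * dot3 u v := by
  simp [dot3, Finset.mul_sum, mul_assoc]

lemma dot3_comm (u v : Fin 3 → ℝ) : dot3 u v = dot3 v u := by
  simp [dot3, mul_comm]

lemma dot3_add_right (u v w : Fin 3 → ℝ) : dot3 u (v + w) = dot3 u v + dot3 u w := by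
  simp only [dot3_comm u, dot3_add_left]

lemma dot3_smul_right (r : ℝ) (u v : Fin 3 → ℝ) : dot3 u (r • v) = r * dot3 u v := by
  simp only [dot3_comm u, dot3_smul_left]

section FormS

variable {nn : ℕ} (S : Matrix (Fin nn) (Fin nn) ℝ)

lemma formS_add_left (u v w : Fin nn → ℝ) :
    formS S (u + v) w = formS S u w + formS S v w := by
  simp [formS, add_mul, Finset.sum_add_distrib]

lemma formS_smul_left (r : ℝ) (u v : Fin nn → ℝ) : formS S (r • u) v = r * formS S u v := by
  simp [formS, Finset.mul_sum, mul_assoc]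

lemma formS_add_right (u v w : Fin nn → ℝ) :
    formS S u (v + w) = formS S u v + formS S u w := by
  simp [formS, mul_add, Finset.sum_add_distrib]

lemma formS_smul_right (r : ℝ) (u v : Fin nn → ℝ) : formS S u (r • v) = r * formS S u v := by
  simp [formS, Finset.mul_sum, mul_left_comm]

lemma formS_comm (hS : S.IsSymm) (u v : Fin nn → ℝ) : formS S u v = formS S v u := by
  unfold formS
  rw [Finset.sum_comm]
  refine Finset.sum_congr rfl fun i _ => Finset.sum_congr rfl fun j _ => ?_
  rw [hS.apply i j]
  ring

end FormS

/-- The rational identity behind the zero-curvature condition: equality of the coefficients of `X⃗`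
(first conjunct) and of `H⃗` (second conjunct) in the two composites. Here `g = Γ⁻¹`, `x = X⃗·Y⃗`,
`e = ⟨H⃗, K⃗⟩`; `u, U` are the coefficients in `L₁`, `u', U'` those in `L₂`, and `v, V`, `v', V'` those
in `L₂₍₁₎ ∘ L₁` and `L₁₍₂₎ ∘ L₂`, with the factor `g` of the shifted vectors included. -/
lemma lax_coeff {p q α β l a b c d g x e u U v V u' U' v' V' : ℝ}
    (hg : g ^ 2 * (1 - p * q) = 1) (hA : 1 - α * l ≠ 0) (hB : 1 - β * l ≠ 0)
    (hx : 2 * x + p + q = 0) (he : 2 * e + p * β + q * α = 0)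
    (hu : u = 2 * l / (1 - α * l) * (α * a + c))
    (hU : U = 2 / (1 - α * l) * (a + l * c))
    (hu' : u' = 2 * l / (1 - β * l) * (β * b + d))
    (hU' : U' = 2 / (1 - β * l) * (b + l * d))
    (hv : v = 2 * l / (1 - β * l) *
      (β * (g * (b + p * a + u * (x + p))) + g * (d + q * c + U * (e + q * α))) * g)
    (hV : V = 2 / (1 - β * l) *
      (g * (b + p * a + u * (x + p)) + l * (g * (d + q * c + U * (e + q * α)))) * g)
    (hv' : v' = 2 * l / (1 - α * l) *
      (α * (g * (a + q * b + u' * (x + q))) + g * (c + p * d + U' * (e + p * β))) * g)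
    (hV' : V' = 2 / (1 - α * l) *
      (g * (a + q * b + u' * (x + q)) + l * (g * (c + p * d + U' * (e + p * β)))) * g) :
    u + p * v = v' ∧ U + q * V = V' := by
  obtain rfl : x = -(p + q) / 2 := by linarith
  obtain rfl : e = -(p * β + q * α) / 2 := by linarith
  -- Naming the denominators keeps `field_simp` from rewriting them before cancelling.
  obtain ⟨A, hAdef⟩ : ∃ A, A = 1 - α * l := ⟨_, rfl⟩
  obtain ⟨B, hBdef⟩ : ∃ B, B = 1 - β * l := ⟨_, rfl⟩
  obtain ⟨G, hGdef⟩ : ∃ G, G = 1 - p * q := ⟨_, rfl⟩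
  rw [← hAdef] at hA hu hU hv' hV'
  rw [← hBdef] at hB hu' hU' hv hV
  rw [← hGdef] at hg
  have hG : G ≠ 0 := by
    rintro rfl
    simp at hg
  have hg2 : g ^ 2 = 1 / G := by
    field_simp
    exact hg
  have ev : v = 2 * l / B * (β * (b + p * a + u * (-(p + q) / 2 + p)) +
      (d + q * c + U * (-(p * β + q * α) / 2 + q * α))) * (1 / G) := by
    rw [hv, ← hg2]; ring
  have eV : V = 2 / B * ((b + p * a + u * (-(p + q) / 2 + p)) +
      l * (d + q * c + U * (-(p * β + q * α) / 2 + q * α))) * (1 / G) := by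
    rw [hV, ← hg2]; ring
  have ev' : v' = 2 * l / A * (α * (a + q * b + u' * (-(p + q) / 2 + q)) +
      (c + p * d + U' * (-(p * β + q * α) / 2 + p * β))) * (1 / G) := by
    rw [hv', ← hg2]; ring
  have eV' : V' = 2 / A * ((a + q * b + u' * (-(p + q) / 2 + q)) +
      l * (c + p * d + U' * (-(p * β + q * α) / 2 + p * β))) * (1 / G) := by
    rw [hV', ← hg2]; ring
  rw [ev, eV, ev', eV', hu, hU, hu', hU']
  constructor <;> field_simp <;> rw [hAdef, hBdef, hGdef] <;> ring

/-- compatibility of the Lax pair for discrete O surfaces: the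
lattice-dependent linear maps `L₁`, `L₂` of the Lax pair satisfy the discrete
zero-curvature condition `L₂₍₁₎ ∘ L₁ = L₁₍₂₎ ∘ L₂`. -/
theorem stmt_18 {nn : ℕ} (Xv Yv : ℤ × ℤ → Fin 3 → ℝ)
    (S : Matrix (Fin nn) (Fin nn) ℝ) (hS : S.IsSymm)
    (Hv Kv : ℤ × ℤ → Fin nn → ℝ) (p q Γ : ℤ × ℤ → ℝ)
    (hXu : ∀ n, dot3 (Xv n) (Xv n) = 1) (hYu : ∀ n, dot3 (Yv n) (Yv n) = 1)
    (hΓ : ∀ n, Γ n ^ 2 = 1 - p n * q n) (hΓ0 : ∀ n, Γ n ≠ 0)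
    (hXv : ∀ n, Xv (s2 n) = (Γ n)⁻¹ • (Xv n + q n • Yv n))
    (hYv : ∀ n, Yv (s1 n) = (Γ n)⁻¹ • (Yv n + p n • Xv n))
    (hHv : ∀ n, Hv (s2 n) = (Γ n)⁻¹ • (Hv n + p n • Kv n))
    (hKv : ∀ n, Kv (s1 n) = (Γ n)⁻¹ • (Kv n + q n • Hv n))
    (hcurv : ∀ n, 2 * dot3 (Xv n) (Yv n) + p n + q n = 0)
    (horth : ∀ n, 2 * formS S (Hv n) (Kv n) + p n * formS S (Kv n) (Kv n) +
        q n * formS S (Hv n) (Hv n) = 0)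
    (α β : ℤ × ℤ → ℝ)
    (hα : ∀ n, α n = formS S (Hv n) (Hv n)) (hβ : ∀ n, β n = formS S (Kv n) (Kv n))
    (lam : ℝ) (hlam1 : ∀ n, 1 - α n * lam ≠ 0) (hlam2 : ∀ n, 1 - β n * lam ≠ 0)
    (L1 L2 : ℤ × ℤ → (Fin 3 → ℝ) × (Fin nn → ℝ) → (Fin 3 → ℝ) × (Fin nn → ℝ))
    (hL1 : ∀ n m w, L1 n (m, w) =
      (m + (2 * lam / (1 - α n * lam) * (α n * dot3 (Xv n) m + formS S (Hv n) w)) • Xv n,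
       w + (2 / (1 - α n * lam) * (dot3 (Xv n) m + lam * formS S (Hv n) w)) • Hv n))
    (hL2 : ∀ n m w, L2 n (m, w) =
      (m + (2 * lam / (1 - β n * lam) * (β n * dot3 (Yv n) m + formS S (Kv n) w)) • Yv n,
       w + (2 / (1 - β n * lam) * (dot3 (Yv n) m + lam * formS S (Kv n) w)) • Kv n)) :
    ∀ n v, L2 (s1 n) (L1 n v) = L1 (s2 n) (L2 n v) := by
  rintro n ⟨m, w⟩
  have hΓ2 : (Γ n)⁻¹ ^ 2 * (1 - p n * q n) = 1 := by
    rw [← hΓ n, ← mul_pow, inv_mul_cancel₀ (hΓ0 n), one_pow]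
  have hKH : formS S (Kv n) (Hv n) = formS S (Hv n) (Kv n) := formS_comm S hS _ _
  have hYX : dot3 (Yv n) (Xv n) = dot3 (Xv n) (Yv n) := dot3_comm _ _
  have horth' := horth n
  rw [← hα n, ← hβ n] at horth'
  have hβ1 : β (s1 n) = β n := by
    rw [hβ (s1 n), hKv]
    simp only [formS_add_left, formS_smul_left, formS_add_right, formS_smul_right, hKH,
      ← hα n, ← hβ n]
    linear_combination (β n) * hΓ2 + (Γ n)⁻¹ ^ 2 * q n * horth'
  have hα2 : α (s2 n) = α n := by
    rw [hα (s2 n), hHv]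
    simp only [formS_add_left, formS_smul_left, formS_add_right, formS_smul_right, hKH,
      ← hα n, ← hβ n]
    linear_combination (α n) * hΓ2 + (Γ n)⁻¹ ^ 2 * p n * horth'
  obtain ⟨h1, h2⟩ := lax_coeff (a := dot3 (Xv n) m) (b := dot3 (Yv n) m)
    (c := formS S (Hv n) w) (d := formS S (Kv n) w) hΓ2 (hlam1 n) (hlam2 n) (hcurv n) horth'
    rfl rfl rfl rfl rfl rfl rfl rfl
  obtain ⟨h3, h4⟩ := lax_coeff (p := q n) (q := p n) (a := dot3 (Yv n) m) (b := dot3 (Xv n) m)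
    (c := formS S (Kv n) w) (d := formS S (Hv n) w) (x := dot3 (Xv n) (Yv n))
    (e := formS S (Hv n) (Kv n)) (by rw [mul_comm (q n)]; exact hΓ2) (hlam2 n) (hlam1 n)
    (by linarith [hcurv n]) (by linarith [horth'])
    rfl rfl rfl rfl rfl rfl rfl rfl
  rw [hL1 n, hL2 n, hL1, hL2, hβ1, hα2, hXv, hYv, hHv, hKv]
  simp only [formS_add_left, formS_smul_left, formS_add_right, formS_smul_right,
    dot3_add_left, dot3_smul_left, dot3_add_right, dot3_smul_right, hKH, hYX, hXu n, hYu n,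
    ← hα n, ← hβ n]
  ext i
  · simp only [Pi.add_apply, Pi.smul_apply, smul_eq_mul]
    linear_combination Xv n i * h1 - Yv n i * h3
  · simp only [Pi.add_apply, Pi.smul_apply, smul_eq_mul]
    linear_combination Hv n i * h2 - Kv n i * h4

end
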